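/- Let L be a finite Galois extension of K and let B be the integral closure of A in L. If B is a finitely generated A-module, then B is of complete intersection over A; that is, for some n ≥ 0 there exists a surjective A-algebra homomorphism from the polynomial ring A[X₁, …, Xₙ] onto B whose kernel is generated by n elements. -/

import Mathlib

/-- An `A`-algebra `C` is of *complete intersection* over `A` if for some `n ≥ 0` there is a
surjective `A`-algebra homomorphism `A[X₁, …, Xₙ] → C` whose kernel is generated by `n`
elements. -/
def IsCompleteIntersectionOver (A C : Type*) [CommRing A] [CommRing C] [Algebra A C] : Prop :=
  ∃ (n : ℕ) (φ : MvPolynomial (Fin n) A →ₐ[A] C),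
    Function.Surjective φ ∧
      ∃ g : Fin n → MvPolynomial (Fin n) A, RingHom.ker φ = Ideal.span (Set.range g)

/-!
Étale algebras over the Henselian ring `A` admit sections through rational points, which makes the
finite domain `B` local; being integrally closed and integral over a valuation ring, `B` is then a
valuation ring itself, and it is free over `A`. With `m` the maximal ideal of `A`, the fibre
`B / mB` is a finite local algebra over `A / m` whose maximal ideal is principal, say generated by
`π`. It is presented by adding to the generators of its residue field one variable for `π`, and to
the lifted relations of the residue field a power of that variable.

Lifting this presentation to `A`, Nakayama shows that the lifted relations generate the kernel of
`A[X₁, …, Xₙ] → B` after inverting one element that becomes a unit in `B`; inverting it costs one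
more variable and one more relation.
-/

theorem exists_mvPolynomial_comp_eq {ι A B C : Type*} [CommRing A] [CommRing B] [CommRing C]
    [Algebra A B] [Algebra A C] (f : B →ₐ[A] C) (hf : Function.Surjective f)
    (ψ : MvPolynomial ι A →ₐ[A] C) : ∃ θ : MvPolynomial ι A →ₐ[A] B, f.comp θ = ψ := by
  refine ⟨MvPolynomial.aeval fun i ↦ Function.surjInv hf (ψ (.X i)), ?_⟩
  ext i
  simp [Function.surjInv_eq]

namespace IsCompleteIntersectionOver

section Basic

variable {A B C : Type*} [CommRing A] [CommRing B] [CommRing C] [Algebra A B] [Algebra A C]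

theorem of_mvPolynomialEquiv {ι S : Type*} [Finite ι] [CommRing S] [Algebra A S]
    (e : MvPolynomial ι A ≃ₐ[A] S) (φ : S →ₐ[A] C) (hφ : Function.Surjective φ) (g : ι → S)
    (hg : RingHom.ker φ = Ideal.span (Set.range g)) : IsCompleteIntersectionOver A C := by
  obtain ⟨n, ⟨σ⟩⟩ := Finite.exists_equiv_fin ι
  let e' : MvPolynomial (Fin n) A ≃ₐ[A] S := (MvPolynomial.renameEquiv A σ.symm).trans e
  refine ⟨n, φ.comp e'.toAlgHom, hφ.comp e'.surjective, e'.symm ∘ g ∘ σ.symm, ?_⟩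
  calc RingHom.ker (φ.comp e'.toAlgHom)
      = (RingHom.ker φ).comap (e' : MvPolynomial (Fin n) A ≃+* S) := rfl
    _ = Ideal.span (e'.symm '' Set.range g) := by
      rw [hg, ← Ideal.map_symm, Ideal.map_span]; rfl
    _ = Ideal.span (Set.range (e'.symm ∘ g ∘ σ.symm)) := by
      rw [← Set.range_comp, ← Function.comp_assoc, σ.symm.surjective.range_comp]

theorem of_presentation {ι : Type*} [Finite ι] (P : Algebra.Presentation A C ι ι) :
    IsCompleteIntersectionOver A C :=
  of_mvPolynomialEquiv .refl (MvPolynomial.aeval P.val) P.aeval_val_surjective P.relation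
    (P.ker_eq_ker_aeval_val.symm.trans P.span_range_relation_eq_ker.symm)

theorem exists_presentation (h : IsCompleteIntersectionOver A C) :
    ∃ n : ℕ, Nonempty (Algebra.Presentation A C (Fin n) (Fin n)) := by
  obtain ⟨n, φ, hφ, g, hg⟩ := h
  have hφ' : φ = MvPolynomial.aeval (φ ∘ MvPolynomial.X) := by ext; simp
  rw [hφ'] at hφ hg
  exact ⟨n, ⟨{ toGenerators := .ofSurjective _ hφ
               relation := g
               span_range_relation_eq_ker := hg.symm }⟩⟩

theorem trans [Algebra B C] [IsScalarTower A B C] (hAB : IsCompleteIntersectionOver A B)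
    (hBC : IsCompleteIntersectionOver B C) : IsCompleteIntersectionOver A C := by
  obtain ⟨_, ⟨P⟩⟩ := hAB.exists_presentation
  obtain ⟨_, ⟨Q⟩⟩ := hBC.exists_presentation
  exact of_presentation (Q.comp P)

theorem of_algEquiv (e : B ≃ₐ[A] C) (h : IsCompleteIntersectionOver A B) :
    IsCompleteIntersectionOver A C := by
  obtain ⟨_, ⟨P⟩⟩ := h.exists_presentation
  exact of_presentation (P.ofAlgEquiv e)

theorem quotient_span_range {ι : Type*} [Finite ι] (g : ι → MvPolynomial ι A) :
    IsCompleteIntersectionOver A (MvPolynomial ι A ⧸ Ideal.span (Set.range g)) :=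
  of_mvPolynomialEquiv .refl (Ideal.Quotient.mkₐ A _) (Ideal.Quotient.mkₐ_surjective A _) g
    (Ideal.Quotient.mkₐ_ker A _)

theorem of_isLocalizationAway (a : A) [IsLocalization.Away a C] :
    IsCompleteIntersectionOver A C :=
  of_presentation (Algebra.Presentation.localizationAway C a)

variable (A) in
theorem refl : IsCompleteIntersectionOver A A :=
  have : IsLocalization.Away (1 : A) A :=
    IsLocalization.away_of_isUnit_of_bijective A isUnit_one Function.bijective_id
  of_isLocalizationAway 1

theorem adjoinRoot (f : Polynomial A) : IsCompleteIntersectionOver A (AdjoinRoot f) :=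
  of_mvPolynomialEquiv (MvPolynomial.uniqueAlgEquiv A Unit) (AdjoinRoot.mkₐ f)
    AdjoinRoot.mk_surjective (fun _ ↦ f) <| by
      rw [Set.range_const]
      exact Ideal.mk_ker

end Basic

theorem of_finiteDimensional (k l : Type*) [Field k] [Field l] [Algebra k l]
    [FiniteDimensional k l] : IsCompleteIntersectionOver k l := by
  suffices h : ∀ E : IntermediateField k l, IsCompleteIntersectionOver k E from
    (h ⊤).of_algEquiv IntermediateField.topEquiv
  refine IntermediateField.induction_on_adjoin _
    ((refl k).of_algEquiv (IntermediateField.botEquiv k l).symm) fun E x hE ↦ ?_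
  have hx : IsIntegral E x := Algebra.IsIntegral.isIntegral x
  have : IsScalarTower k E (IntermediateField.adjoin E {x}) := .of_algebraMap_eq fun _ ↦ rfl
  exact hE.trans (C := IntermediateField.adjoin E {x}) <|
    (adjoinRoot (minpoly E x)).of_algEquiv (IntermediateField.adjoinRootEquivAdjoin E hx)

end IsCompleteIntersectionOver

section Nilpotent

open IsLocalRing Polynomial

theorem surjective_of_isNilpotent {S R : Type*} [CommRing S] [CommRing R] {φ : S →+* R} {y : S}
    (hy : IsNilpotent (φ y))
    (hφ : Function.Surjective ((Ideal.Quotient.mk (Ideal.span {φ y})).comp φ)) :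
    Function.Surjective φ := by
  have approx (e : ℕ) (r : R) : ∃ s t, r = φ s + φ y ^ e * t := by
    induction e with
    | zero => exact ⟨0, r, by simp⟩
    | succ e ih =>
      obtain ⟨s, t, rfl⟩ := ih
      obtain ⟨s', hs'⟩ := hφ (Ideal.Quotient.mk _ t)
      obtain ⟨t', ht'⟩ := Ideal.mem_span_singleton'.1 (Ideal.Quotient.eq.1 hs'.symm)
      refine ⟨s + y ^ e * s', t', ?_⟩
      simp only [map_add, map_mul, map_pow]
      linear_combination -φ y ^ e * ht'
  obtain ⟨e, he⟩ := hy
  intro r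
  obtain ⟨s, t, rfl⟩ := approx e r
  exact ⟨s, by simp [he]⟩

theorem ker_eq_of_comap_maximalIdeal_le {S R : Type*} [CommRing S] [CommRing R] [IsLocalRing R]
    {φ : S →+* R} {J : Ideal S} {y : S} {e : ℕ} (hJ : J ≤ RingHom.ker φ)
    (hm : (maximalIdeal R).comap φ ≤ J ⊔ Ideal.span {y}) (hye : y ^ e ∈ J)
    (hne : ∀ j < e, φ y ^ j ≠ 0) : RingHom.ker φ = J := by
  suffices h : ∀ j ≤ e, RingHom.ker φ ≤ J ⊔ Ideal.span {y ^ j} from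
    ((h e le_rfl).trans (sup_le le_rfl ((Ideal.span_singleton_le_iff_mem J).2 hye))).antisymm hJ
  intro j
  induction j with
  | zero => simp
  | succ j ih =>
    intro hj f hf
    obtain ⟨a, ha, _, hb, rfl⟩ := Submodule.mem_sup.1 (ih (by lia) hf)
    obtain ⟨b, rfl⟩ := Ideal.mem_span_singleton'.1 hb
    have hφb : φ b * φ y ^ j = 0 := by simpa [(RingHom.mem_ker).1 (hJ ha)] using hf
    have hbm : b ∈ (maximalIdeal R).comap φ := fun hu ↦ hne j hj (hu.mul_right_eq_zero.1 hφb)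
    obtain ⟨a', ha', _, hc, rfl⟩ := Submodule.mem_sup.1 (hm hbm)
    obtain ⟨c, rfl⟩ := Ideal.mem_span_singleton'.1 hc
    refine Submodule.mem_sup.2 ⟨a + a' * y ^ j, add_mem ha (J.mul_mem_right _ ha'), c * y ^ (j + 1),
      Ideal.mem_span_singleton'.2 ⟨c, rfl⟩, by ring⟩

variable {A R T ι : Type*} [CommRing A] [CommRing R] [IsLocalRing R] [CommRing T]
  [Algebra A R] [Algebra A T] {θ : T →ₐ[A] R} {π : R}

theorem aevalTower_surjective_of_residue (hπ : maximalIdeal R = Ideal.span {π})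
    (hnil : IsNilpotent π) (hθ : Function.Surjective ((residue R).comp (θ : T →+* R))) :
    Function.Surjective (aevalTower θ π) := by
  refine surjective_of_isNilpotent (φ := (aevalTower θ π : T[X] →+* R)) (y := X) (by simpa) ?_
  have hX : ((aevalTower θ π : T[X] →+* R)) X = π := by simp
  rw [hX, ← hπ]
  intro x
  obtain ⟨t, rfl⟩ := hθ x
  exact ⟨C t, by simp; rfl⟩

theorem exists_ker_aevalTower_eq_span (hπ : maximalIdeal R = Ideal.span {π})
    (hnil : IsNilpotent π) (hθ : Function.Surjective ((residue R).comp (θ : T →+* R)))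
    {p : ι → T} (hp : RingHom.ker ((residue R).comp (θ : T →+* R)) = Ideal.span (Set.range p)) :
    ∃ g : Option ι → T[X], RingHom.ker (aevalTower θ π) = Ideal.span (Set.range g) := by
  have hker (t : T) : t ∈ Ideal.span (Set.range p) ↔ θ t ∈ maximalIdeal R := by
    rw [← hp, RingHom.mem_ker]
    exact residue_eq_zero_iff _
  have hlift (i : ι) : ∃ q : T[X], aevalTower θ π q * π = θ (p i) := by
    have hpi : θ (p i) ∈ Ideal.span {π} := hπ ▸ (hker _).1 (Ideal.subset_span ⟨i, rfl⟩)
    obtain ⟨r, hr⟩ := Ideal.mem_span_singleton'.1 hpi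
    obtain ⟨q, rfl⟩ := aevalTower_surjective_of_residue hπ hnil hθ r
    exact ⟨q, hr⟩
  choose q hq using hlift
  let g : Option ι → T[X] := fun o ↦ o.elim (X ^ nilpotencyClass π) fun i ↦ C (p i) - q i * X
  have hg (o : Option ι) : g o ∈ Ideal.span (Set.range g) := Ideal.subset_span ⟨o, rfl⟩
  refine ⟨g, ker_eq_of_comap_maximalIdeal_le (φ := (aevalTower θ π : T[X] →+* R)) (y := X)
    (e := nilpotencyClass π) ?_ ?_ (hg none) ?_⟩
  · rw [Ideal.span_le]
    rintro _ ⟨_ | i, rfl⟩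
    · simp [g, pow_nilpotencyClass hnil]
    · simp [g, hq]
  · have hC : Ideal.span (Set.range p) ≤
        (Ideal.span (Set.range g) ⊔ Ideal.span {X}).comap (C : T →+* T[X]) := by
      rw [Ideal.span_le]
      rintro _ ⟨i, rfl⟩
      exact Submodule.mem_sup.2 ⟨_, hg (some i), q i * X,
        Ideal.mem_span_singleton'.2 ⟨_, rfl⟩, sub_add_cancel _ _⟩
    intro f hf
    have hX : f.divX * X ∈ Ideal.span {X} := Ideal.mem_span_singleton'.2 ⟨_, rfl⟩
    have hf0 : θ (f.coeff 0) ∈ maximalIdeal R := by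
      rw [Ideal.mem_comap, ← f.divX_mul_X_add, map_add] at hf
      refine (Ideal.add_mem_iff_right _ ?_).1 (by simpa using hf)
      exact hπ ▸ Ideal.mem_span_singleton'.2 ⟨_, rfl⟩
    rw [← f.divX_mul_X_add]
    exact add_mem (Submodule.mem_sup_right hX) (hC ((hker _).2 hf0))
  · intro j hj
    simpa using Nat.notMem_of_lt_sInf hj

namespace IsCompleteIntersectionOver

theorem of_residueField (hm : (maximalIdeal R).IsPrincipal) (hnil : IsNilpotent (maximalIdeal R))
    (h : IsCompleteIntersectionOver A (ResidueField R)) : IsCompleteIntersectionOver A R := by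
  obtain ⟨π, hπ⟩ := hm
  obtain ⟨n, ψ, hψ, p, hp⟩ := h
  obtain ⟨θ, rfl⟩ := exists_mvPolynomial_comp_eq (IsScalarTower.toAlgHom A R (ResidueField R))
    residue_surjective ψ
  have hπnil : IsNilpotent π := by
    obtain ⟨e, he⟩ := hnil
    exact ⟨e, Ideal.pow_eq_zero_of_mem he le_rfl (hπ ▸ Ideal.mem_span_singleton_self π)⟩
  obtain ⟨g, hg⟩ := exists_ker_aevalTower_eq_span hπ hπnil hψ hp
  exact of_mvPolynomialEquiv (MvPolynomial.optionEquivLeft A (Fin n)) (aevalTower θ π)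
    (aevalTower_surjective_of_residue hπ hπnil hψ) g hg

theorem of_isPrincipal_maximalIdeal {k : Type*} [Field k] [Algebra k R] [Module.Finite k R]
    (hm : (maximalIdeal R).IsPrincipal) : IsCompleteIntersectionOver k R :=
  have : IsArtinianRing R := IsArtinianRing.of_finite k R
  of_residueField hm ((isArtinianRing_iff_isNilpotent_maximalIdeal R).1 ‹_›)
    (of_finiteDimensional k (ResidueField R))

end IsCompleteIntersectionOver

end Nilpotent

section Lifting

variable {A B S : Type*} [CommRing A] [CommRing B] [CommRing S] [Algebra A B] [Algebra A S]
  {I : Ideal A}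

theorem map_le_jacobson_bot_of_isIntegral [Algebra.IsIntegral A B] (hI : I ≤ Ideal.jacobson ⊥) :
    I.map (algebraMap A B) ≤ Ideal.jacobson ⊥ := by
  refine Ideal.map_le_iff_le_comap.2 (hI.trans fun a ha ↦ ?_)
  refine Ideal.mem_sInf.2 fun {M} ⟨_, hM⟩ ↦ ?_
  exact Ideal.mem_sInf.1 ha ⟨bot_le, Ideal.isMaximal_comap_of_isIntegral_of_isMaximal (R := A) M⟩

theorem surjective_of_comp_mkₐ_surjective [Module.Finite A B] (hI : I ≤ Ideal.jacobson ⊥)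
    (φ : S →ₐ[A] B)
    (hφ : Function.Surjective ((Ideal.Quotient.mkₐ A (I.map (algebraMap A B))).comp φ)) :
    Function.Surjective φ := by
  suffices h : ⊤ ≤ LinearMap.range φ.toLinearMap from
    LinearMap.range_eq_top.1 (top_le_iff.1 h)
  refine Submodule.le_of_le_smul_of_le_jacobson_bot Module.Finite.fg_top hI fun b _ ↦ ?_
  obtain ⟨s, hs⟩ := hφ (Ideal.Quotient.mk _ b)
  rw [Ideal.smul_top_eq_map]
  exact Submodule.mem_sup.2 ⟨φ s, ⟨s, rfl⟩, b - φ s, Ideal.Quotient.eq.1 hs.symm,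
    add_sub_cancel _ _⟩

theorem map_inf_ker_eq_mul_of_flat [Module.Flat A B] (I : Ideal A) {φ : S →ₐ[A] B}
    (hφ : Function.Surjective φ) :
    I.map (algebraMap A S) ⊓ RingHom.ker φ = I.map (algebraMap A S) * RingHom.ker φ := by
  refine le_antisymm (fun s ⟨hsI, hsφ⟩ ↦ ?_) Ideal.mul_le_inf
  have hs : s ∈ LinearMap.ker φ.toLinearMap ⊓ I • (⊤ : Submodule A S) :=
    ⟨hsφ, by rwa [Ideal.smul_top_eq_map]⟩
  rw [LinearMap.ker_inf_smul_top_eq_smul_of_flat I φ.toLinearMap hφ] at hs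
  refine Submodule.smul_induction_on hs (fun a ha t ht ↦ ?_) fun _ _ ↦ add_mem
  rw [Algebra.smul_def]
  exact Ideal.mul_mem_mul (Ideal.mem_map_of_mem _ ha) ht

theorem exists_lift_ker_generators {S' B' ι : Type*} [CommRing S'] [CommRing B'] [Algebra A S']
    [Algebra A B'] {φ : S →ₐ[A] B} {red : S →ₐ[A] S'} {q : B →ₐ[A] B'} {ψ : S' →ₐ[A] B'}
    (h : q.comp φ = ψ.comp red) (hφ : Function.Surjective φ) (hred : Function.Surjective red)
    (hkred : RingHom.ker red = I.map (algebraMap A S))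
    (hkq : RingHom.ker q = I.map (algebraMap A B)) {g : ι → S'}
    (hg : RingHom.ker ψ = Ideal.span (Set.range g)) :
    ∃ g' : ι → S, Ideal.span (Set.range g') ≤ RingHom.ker φ ∧
      RingHom.ker φ ≤ Ideal.span (Set.range g') ⊔ I.map (algebraMap A S) := by
  have hlift (i : ι) : ∃ s, φ s = 0 ∧ red s = g i := by
    obtain ⟨s, hs⟩ := hred (g i)
    have hψs : ψ (red s) = 0 := hs ▸ hg.ge (Ideal.subset_span ⟨i, rfl⟩)
    have hqs : φ s ∈ RingHom.ker q := (AlgHom.congr_fun h s).trans hψs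
    rw [hkq, ← φ.comp_algebraMap, ← Ideal.map_map] at hqs
    obtain ⟨t, ht, hts⟩ := (Ideal.mem_map_iff_of_surjective _ hφ).1 hqs
    have hredt : red t = 0 := hkred.ge ht
    exact ⟨s - t, by simpa [sub_eq_zero] using hts.symm, by simp [hs, hredt]⟩
  choose g' hφg' hg' using hlift
  refine ⟨g', Ideal.span_le.2 (Set.range_subset_iff.2 hφg'), fun s hs ↦ ?_⟩
  have hmap : Ideal.span (Set.range g) = (Ideal.span (Set.range g')).map red := by
    rw [Ideal.map_span, ← Set.range_comp]
    exact congr_arg (Ideal.span <| Set.range ·) (funext hg').symm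
  rw [← hkred, ← Ideal.comap_map_of_surjective' red hred, ← hmap, ← hg, Ideal.mem_comap]
  calc ψ (red s) = q (φ s) := (AlgHom.congr_fun h s).symm
    _ = 0 := by rw [(RingHom.mem_ker).1 hs, map_zero]

theorem isLocalizationAway_of_surjective [Algebra S B] {h : S}
    (hsurj : Function.Surjective (algebraMap S B)) (hunit : IsUnit (algebraMap S B h))
    (hker : ∀ s ∈ RingHom.ker (algebraMap S B), h * s = 0) : IsLocalization.Away h B where
  map_units := by
    rintro ⟨_, n, rfl⟩
    simpa using hunit.pow n
  surj b := by
    obtain ⟨s, rfl⟩ := hsurj b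
    exact ⟨(s, 1), by simp⟩
  exists_of_eq {x y} hxy := by
    refine ⟨⟨h, Submonoid.mem_powers h⟩, sub_eq_zero.1 ?_⟩
    rw [← mul_sub]
    exact hker _ (by simp [RingHom.mem_ker, hxy])

end Lifting

section Projective

namespace IsCompleteIntersectionOver

variable {A B ι : Type*} [CommRing A] [CommRing B] [Algebra A B] [Finite ι]
  {φ : MvPolynomial ι A →ₐ[A] B} {g : ι → MvPolynomial ι A} {I : Ideal A}

theorem of_mul_mem_span (hφ : Function.Surjective φ)
    (hg : Ideal.span (Set.range g) ≤ RingHom.ker φ) {h : MvPolynomial ι A} (hunit : IsUnit (φ h))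
    (hker : ∀ f ∈ RingHom.ker φ, h * f ∈ Ideal.span (Set.range g)) :
    IsCompleteIntersectionOver A B := by
  let C := MvPolynomial ι A ⧸ Ideal.span (Set.range g)
  let ψ : C →ₐ[A] B := Ideal.Quotient.liftₐ _ φ hg
  let _ : Algebra C B := ψ.toAlgebra
  have : IsScalarTower A C B := .of_algHom ψ
  have : IsLocalization.Away (Ideal.Quotient.mk _ h : C) B := by
    refine isLocalizationAway_of_surjective (fun b ↦ ?_) hunit fun s hs ↦ ?_
    · obtain ⟨f, rfl⟩ := hφ b
      exact ⟨Ideal.Quotient.mk _ f, rfl⟩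
    · obtain ⟨f, rfl⟩ := Ideal.Quotient.mk_surjective s
      rw [← map_mul]
      exact Ideal.Quotient.eq_zero_iff_mem.2 (hker f hs)
  exact (quotient_span_range g).trans (of_isLocalizationAway (Ideal.Quotient.mk _ h : C))

variable [Module.Finite A B] [Module.Projective A B]

theorem of_ker_le_sup (hI : I ≤ Ideal.jacobson ⊥) (hφ : Function.Surjective φ)
    (hg : Ideal.span (Set.range g) ≤ RingHom.ker φ)
    (hker : RingHom.ker φ ≤
      Ideal.span (Set.range g) ⊔ I.map (algebraMap A (MvPolynomial ι A))) :
    IsCompleteIntersectionOver A B := by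
  have : Module.FinitePresentation A B := Module.finitePresentation_of_projective A B
  have : Algebra.FinitePresentation A B := .of_finitePresentation A B
  have hfg : (RingHom.ker φ).FG := Algebra.FinitePresentation.ker_fG_of_surjective φ hφ
  have hle : RingHom.ker φ ≤ Ideal.span (Set.range g) ⊔
      I.map (algebraMap A (MvPolynomial ι A)) • RingHom.ker φ := by
    rw [smul_eq_mul, ← map_inf_ker_eq_mul_of_flat I hφ, ← sup_inf_assoc_of_le _ hg]
    exact le_inf hker le_rfl
  obtain ⟨h, h1, h2⟩ := Submodule.exists_sub_one_mem_and_smul_le_of_fg_of_le_sup hfg le_rfl hle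
  refine of_mul_mem_span hφ hg (h := h) ?_ fun f hf ↦
    h2 (Submodule.smul_mem_pointwise_smul f h _ hf)
  have hφh : φ (h - 1) ∈ I.map (algebraMap A B) := by
    rw [← φ.comp_algebraMap, ← Ideal.map_map]
    exact Ideal.mem_map_of_mem (φ : MvPolynomial ι A →+* B) h1
  simpa using Ideal.mem_jacobson_bot.1 (map_le_jacobson_bot_of_isIntegral hI hφh) 1

theorem of_quotient (hI : I ≤ Ideal.jacobson ⊥)
    (h : IsCompleteIntersectionOver (A ⧸ I) (B ⧸ I.map (algebraMap A B))) :
    IsCompleteIntersectionOver A B := by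
  obtain ⟨n, ψ, hψ, g, hg⟩ := h
  let red : MvPolynomial (Fin n) A →ₐ[A] MvPolynomial (Fin n) (A ⧸ I) :=
    MvPolynomial.mapAlgHom (Ideal.Quotient.mkₐ A I)
  have hred : Function.Surjective red :=
    MvPolynomial.map_surjective _ Ideal.Quotient.mk_surjective
  have hkred : RingHom.ker red = I.map (algebraMap A (MvPolynomial (Fin n) A)) :=
    (MvPolynomial.ker_mapAlgHom _).trans (congr_arg _ (Ideal.Quotient.mkₐ_ker A I))
  obtain ⟨φ, hφ⟩ := exists_mvPolynomial_comp_eq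
    (Ideal.Quotient.mkₐ A (I.map (algebraMap A B)))
    (Ideal.Quotient.mkₐ_surjective A _) ((ψ.restrictScalars A).comp red)
  have hφs : Function.Surjective φ :=
    surjective_of_comp_mkₐ_surjective hI φ (hφ ▸ hψ.comp hred)
  obtain ⟨g', hg', hker⟩ := exists_lift_ker_generators hφ hφs hred hkred
    (Ideal.Quotient.mkₐ_ker A _) hg
  exact of_ker_le_sup hI hφs hg' hker

end IsCompleteIntersectionOver

end Projective

section Henselian

open IsLocalRing TensorProduct

variable {R S k : Type*} [CommRing R] [HenselianLocalRing R] [CommRing S] [Algebra R S]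
  [Field k] [Algebra R k]

theorem exists_hasMap_of_henselianLocalRing (P : StandardEtalePair R)
    (hk : Function.Surjective (algebraMap R k)) {x : k} (hx : P.HasMap x) :
    ∃ a : R, P.HasMap a ∧ algebraMap R k a = x := by
  have : IsLocalHom (algebraMap R k) := .of_surjective _ hk
  have hmem (a : R) : a ∈ maximalIdeal R ↔ algebraMap R k a = 0 := by
    rw [← ker_eq_maximalIdeal _ hk, RingHom.mem_ker]
  obtain ⟨a₀, rfl⟩ := hk x
  obtain ⟨a, ha, haa₀⟩ := HenselianLocalRing.is_henselian P.f P.monic_f a₀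
    ((hmem _).2 <| by simpa [Polynomial.aeval_algebraMap_apply] using hx.1)
    (isUnit_of_map_unit (algebraMap R k) _ <| by
      simpa only [Polynomial.aeval_algebraMap_apply, Polynomial.coe_aeval_eq_eval]
        using hx.isUnit_derivative_f)
  have haa₀ : algebraMap R k a = algebraMap R k a₀ := by
    rwa [hmem, map_sub, sub_eq_zero] at haa₀
  refine ⟨a, ⟨by simpa using ha, isUnit_of_map_unit (algebraMap R k) _ ?_⟩, haa₀⟩
  rw [← Polynomial.aeval_algebraMap_apply, haa₀]
  exact hx.2

theorem exists_algHom_of_isStandardEtale [Algebra.IsStandardEtale R S]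
    (hk : Function.Surjective (algebraMap R k)) (φ : S →ₐ[R] k) :
    ∃ σ : S →ₐ[R] R, (Algebra.ofId R k).comp σ = φ := by
  obtain ⟨P⟩ := Algebra.IsStandardEtale.nonempty_standardEtalePresentation (R := R) (S := S)
  obtain ⟨a, ha, hax⟩ := exists_hasMap_of_henselianLocalRing P.P hk (P.hasMap.map φ)
  refine ⟨(P.P.lift a ha).comp P.equivRing, ?_⟩
  suffices h : (Algebra.ofId R k).comp (P.P.lift a ha) = φ.comp P.equivRing.symm by
    rw [← AlgHom.comp_assoc, h]
    ext; simp
  exact P.P.hom_ext (by simp [hax, Algebra.ofId_apply])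

theorem exists_algHom_of_etale [Algebra.Etale R S]
    (hk : Function.Surjective (algebraMap R k)) (φ : S →ₐ[R] k) :
    ∃ σ : S →ₐ[R] R, (Algebra.ofId R k).comp σ = φ := by
  have : (RingHom.ker φ).IsPrime := RingHom.ker_isPrime _
  obtain ⟨f, hf, _⟩ := Algebra.IsEtaleAt.exists_isStandardEtale (R := R) (RingHom.ker φ)
  obtain ⟨σ, hσ⟩ := exists_algHom_of_isStandardEtale hk
    (IsLocalization.liftAlgHom (M := .powers f) (S := Localization.Away f) (f := φ) <| by
      rintro ⟨_, n, rfl⟩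
      simpa using (IsUnit.mk0 (φ f) hf).pow n)
  refine ⟨σ.comp (IsScalarTower.toAlgHom R S (Localization.Away f)), ?_⟩
  rw [← AlgHom.comp_assoc, hσ]
  ext; simp

theorem exists_algHom_comap_maximalIdeal_eq [Algebra.Etale R S] (P : Ideal S) [P.IsPrime]
    [P.LiesOver (maximalIdeal R)] (hP : Function.Bijective
      (Ideal.ResidueField.mapₐ (maximalIdeal R) P (Algebra.ofId R S) (P.over_def _))) :
    ∃ σ : S →ₐ[R] R, (maximalIdeal R).comap σ = P := by
  have hk : Function.Surjective (algebraMap R P.ResidueField) := by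
    rw [← AlgHom.comp_algebraMap (Ideal.ResidueField.mapₐ (maximalIdeal R) P (Algebra.ofId R S)
      (P.over_def _))]
    exact hP.surjective.comp (Ideal.algebraMap_residueField_surjective _)
  obtain ⟨σ, hσ⟩ := exists_algHom_of_etale hk (IsScalarTower.toAlgHom R S P.ResidueField)
  refine ⟨σ, Ideal.ext fun s ↦ ?_⟩
  rw [Ideal.mem_comap, ← ker_eq_maximalIdeal _ hk, RingHom.mem_ker,
    ← Ideal.algebraMap_residueField_eq_zero]
  exact Eq.congr_left (AlgHom.congr_fun hσ s)

theorem isLocalRing_of_henselianLocalRing (A : Type*) {B : Type*} [CommRing A]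
    [HenselianLocalRing A] [CommRing B] [Nontrivial B] [Algebra A B] [Module.Finite A B]
    (hB : ∀ e : B, IsIdempotentElem e → e = 0 ∨ e = 1) : IsLocalRing B := by
  -- Over an étale neighbourhood `R'` an idempotent `e` isolates the maximal ideal `q`. Pulling back
  -- along a section of `R'` turns `e` into an idempotent of `B`, hence into `1`.
  obtain ⟨q, hq⟩ := Ideal.exists_maximal B
  have hover (q' : Ideal B) [q'.IsMaximal] : q'.LiesOver (maximalIdeal A) :=
    ⟨(eq_maximalIdeal (Ideal.IsMaximal.under A q')).symm⟩
  obtain ⟨R', _, _, _, P, _, _, e, he, P', _, _, hP'q, heP', hbij, _, huniq⟩ :=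
    Algebra.exists_etale_isIdempotentElem_forall_liesOver_eq (maximalIdeal A) q
  obtain ⟨σ, hσ⟩ := exists_algHom_comap_maximalIdeal_eq P hbij
  let τ : R' ⊗[A] B →ₐ[A] B :=
    Algebra.TensorProduct.productMap ((Algebra.ofId A B).comp σ) (.id A B)
  have hτ (q' : Ideal B) : (q'.comap τ).comap Algebra.TensorProduct.includeRight = q' := by
    ext b
    simp [τ]
  have hτP (q' : Ideal B) [q'.IsMaximal] : (q'.comap τ).LiesOver P := by
    refine ⟨Ideal.ext fun r ↦ ?_⟩
    rw [← hσ, (hover q').over]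
    simp [τ, Algebra.ofId_apply]
  have hτq : q.comap τ = P' := by
    refine Ideal.eq_of_comap_eq_comap_of_bijective_residueFieldMap hbij _ _ ?_
    exact (hτ q).trans hP'q.symm
  have hτe : τ e = 1 := (hB _ (he.map τ)).resolve_left fun h0 ↦ heP' <| by
    rw [← hτq, Ideal.mem_comap, h0]
    exact q.zero_mem
  refine .of_unique_max_ideal ⟨q, hq, fun q' hq' ↦ ?_⟩
  have hτq' : q'.comap τ = P' := huniq _ inferInstance (hτP q') <| by
    rw [Ideal.mem_comap, hτe]
    exact q'.one_notMem
  calc q' = (q'.comap τ).comap Algebra.TensorProduct.includeRight := (hτ q').symm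
    _ = (q.comap τ).comap Algebra.TensorProduct.includeRight := by rw [hτq', hτq]
    _ = q := hτ q

end Henselian

section Valuation

open Polynomial IsLocalization

theorem isInteger_or_isInteger_inv_of_isUnit_coeff {B L : Type*} [CommRing B] [IsLocalRing B]
    [Field L] [Algebra B L] [IsIntegrallyClosedIn B L] {x : L} {f : B[X]} (hf : aeval x f = 0)
    {i : ℕ} (hi : IsUnit (f.coeff i)) : IsInteger B x ∨ IsInteger B x⁻¹ := by
  -- `a * x = c` is integral over `B`; if neither `a` nor `c` is a unit, then replacing the leading
  -- term `a * X ^ (n + 1)` by `c * X ^ n` lowers the degree and keeps a unit coefficient.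
  induction hn : f.natDegree using Nat.strong_induction_on generalizing f with | h n ih
  set a := f.leadingCoeff with ha
  obtain ⟨c, hc⟩ := IsIntegrallyClosedIn.isIntegral_iff.1 (isIntegral_leadingCoeff_smul f x hf)
  rw [← ha, Algebra.smul_def] at hc
  by_cases hau : IsUnit a
  · refine .inl ⟨hau.unit⁻¹ * c, ?_⟩
    rw [map_mul, hc, ← mul_assoc, ← map_mul, hau.val_inv_mul, map_one, one_mul]
  by_cases hcu : IsUnit c
  · refine .inr ⟨hcu.unit⁻¹ * a, eq_inv_of_mul_eq_one_left ?_⟩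
    rw [map_mul, mul_assoc, ← hc, ← map_mul, hcu.val_inv_mul, map_one]
  have hin : i ≠ n := fun h ↦ hau (by rwa [ha, leadingCoeff, hn, ← h])
  obtain _ | n := n
  · rw [coeff_eq_zero_of_natDegree_lt (by lia)] at hi
    exact absurd hi not_isUnit_zero
  refine ih _ (Nat.lt_succ_of_le ?_) (f := f.eraseLead + C c * X ^ n) ?_ ?_ rfl
  · have : f.eraseLead.natDegree ≤ n := (eraseLead_natDegree_le ..).trans (by lia)
    compute_degree!
  · simp [← self_sub_monomial_natDegree_leadingCoeff, hf, hn, pow_succ', ← ha, hc, mul_assoc]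
  · rw [← IsLocalRing.notMem_maximalIdeal] at hi ⊢
    rw [coeff_add, eraseLead_coeff, if_neg (hn ▸ hin), coeff_C_mul, Ideal.add_mem_iff_left]
    · exact hi
    · exact Ideal.mul_mem_right _ _ hcu

theorem exists_eq_C_mul_coeff_eq_one {A : Type*} [CommRing A] [IsDomain A] [ValuationRing A]
    {p : A[X]} (hp : p ≠ 0) : ∃ (a : A) (q : A[X]) (i : ℕ), p = C a * q ∧ q.coeff i = 1 := by
  classical
  obtain ⟨i, hi, hmax⟩ := p.support.exists_max_image (fun j ↦ Ideal.span {p.coeff j})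
    (support_nonempty.2 hp)
  have hdvd : C (p.coeff i) ∣ p := (C_dvd_iff_dvd_coeff _ _).2 fun j ↦ by
    by_cases hj : j ∈ p.support
    · exact Ideal.span_singleton_le_span_singleton.1 (hmax j hj)
    · simp [notMem_support_iff.1 hj]
  obtain ⟨q, hq⟩ := hdvd
  refine ⟨p.coeff i, q, i, hq, mul_left_cancel₀ (mem_support_iff.1 hi) ?_⟩
  rw [← coeff_C_mul, ← hq, mul_one]

theorem valuationRing_of_isIntegral (A : Type*) {B : Type*} [CommRing A] [IsDomain A]
    [ValuationRing A] [CommRing B] [IsDomain B] [IsLocalRing B] [IsIntegrallyClosed B]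
    [Algebra A B] [FaithfulSMul A B] [Algebra.IsIntegral A B] : ValuationRing B := by
  refine (ValuationRing.iff_isInteger_or_isInteger B (FractionRing B)).2 fun x ↦ ?_
  have hx : IsAlgebraic A x := by
    have : Algebra.IsAlgebraic B (FractionRing B) :=
      IsLocalization.isAlgebraic _ (nonZeroDivisors B)
    exact (Algebra.IsAlgebraic.trans A B (FractionRing B)).isAlgebraic x
  obtain ⟨p, hp, hpx⟩ := hx
  obtain ⟨a, q, i, rfl, hqi⟩ := exists_eq_C_mul_coeff_eq_one hp
  have hqx : aeval x q = 0 := by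
    have ha : algebraMap A (FractionRing B) a ≠ 0 := by
      rw [IsScalarTower.algebraMap_apply A B, map_ne_zero_iff _ (IsFractionRing.injective B _),
        map_ne_zero_iff _ (FaithfulSMul.algebraMap_injective A B)]
      rintro rfl
      simp at hp
    simpa [ha] using hpx
  refine isInteger_or_isInteger_inv_of_isUnit_coeff (f := q.map (algebraMap A B)) (i := i) ?_ ?_
  · simpa using hqx
  · simp [hqi]

end Valuation

section Fibre

open IsLocalRing

theorem projective_of_valuationRing (A B : Type*) [CommRing A] [IsDomain A] [ValuationRing A]
    [CommRing B] [IsDomain B] [Algebra A B] [FaithfulSMul A B] [Module.Finite A B] :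
    Module.Projective A B := by
  have : Module.IsTorsionFree A B :=
    Module.isTorsionFree_iff_algebraMap_injective.2 (FaithfulSMul.algebraMap_injective A B)
  have : Module.Flat A B := Module.Flat.flat_iff_torsion_eq_bot_of_isBezout.2
    (Submodule.isTorsionFree_iff_torsion_eq_bot.1 this)
  have : Module.Free A B := Module.free_of_flat_of_isLocalRing
  infer_instance

theorem IsCompleteIntersectionOver.quotient_map_maximalIdeal (A B : Type*) [CommRing A]
    [IsLocalRing A] [CommRing B] [IsLocalRing B] [IsBezout B] [Algebra A B] [Module.Finite A B] :
    IsCompleteIntersectionOver (A ⧸ maximalIdeal A)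
      (B ⧸ (maximalIdeal A).map (algebraMap A B)) := by
  let _ : Field (A ⧸ maximalIdeal A) := Ideal.Quotient.field _
  let F := B ⧸ (maximalIdeal A).map (algebraMap A B)
  have hF : Function.Surjective (algebraMap B F) := Ideal.Quotient.mk_surjective
  have : Module.Finite (A ⧸ maximalIdeal A) F := .of_restrictScalars_finite A _ _
  have : Nontrivial F := Ideal.Quotient.nontrivial_iff.2 <| ne_top_of_le_ne_top
    (maximalIdeal.isMaximal B).ne_top <|
    (map_le_jacobson_bot_of_isIntegral (maximalIdeal_le_jacobson ⊥)).trans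
      (jacobson_eq_maximalIdeal ⊥ bot_ne_top).le
  have : IsLocalRing F := .of_surjective' _ hF
  have : IsBezout F := hF.isBezout
  have : IsNoetherianRing F := .of_finite (A ⧸ maximalIdeal A) F
  exact of_isPrincipal_maximalIdeal (IsBezout.isPrincipal_of_FG _ (IsNoetherian.noetherian _))

end Fibre

theorem complete_intersection_of_module_finite_general {A B : Type*} [CommRing A] [IsDomain A]
    [ValuationRing A] [HenselianLocalRing A] [CommRing B] [IsDomain B] [IsIntegrallyClosed B]
    [Algebra A B] [FaithfulSMul A B] [Module.Finite A B] : IsCompleteIntersectionOver A B := by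
  have : IsLocalRing B := isLocalRing_of_henselianLocalRing A
    fun _ ↦ IsIdempotentElem.iff_eq_zero_or_one.1
  have : ValuationRing B := valuationRing_of_isIntegral A
  have : Module.Projective A B := projective_of_valuationRing A B
  exact .of_quotient (IsLocalRing.maximalIdeal_le_jacobson ⊥)
    (.quotient_map_maximalIdeal A B)

/-- Let `A` be a Henselian valuation ring which is not a field, with fraction field `K`, let
`L/K` be a finite Galois extension and let `B` be the integral closure of `A` in `L`.  If `B`
is a finitely generated `A`-module, then `B` is of complete intersection over `A`. -/
theorem complete_intersection_of_module_finite
    {A K L : Type*} [CommRing A] [IsDomain A] [ValuationRing A] [HenselianLocalRing A]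
    (hA : ¬IsField A)
    [Field K] [Algebra A K] [IsFractionRing A K]
    [Field L] [Algebra K L] [Algebra A L] [IsScalarTower A K L]
    [IsGalois K L] [FiniteDimensional K L]
    (hfin : Module.Finite A ↥(integralClosure A L)) :
    IsCompleteIntersectionOver A ↥(integralClosure A L) := by
  have : IsIntegrallyClosed (integralClosure A L) :=
    integralClosure.isIntegrallyClosedOfFiniteExtension K
  have : FaithfulSMul A L := .trans A K L
  exact complete_intersection_of_module_finite_general
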